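/- Let P and Q be integral polytopes in ℝ^n with P ≠ Q. Then there exists a group homomorphism φ : ℤ^n → ℤ such that the images φ_ℝ(P) and φ_ℝ(Q) under the ℝ-linear extension φ_ℝ : ℝ^n → ℝ are different subsets of ℝ. -/

import Mathlib

/-!
If `P ≠ Q`, one of the two sets contains a point `x` outside the other, say `x ∉ Q`. By
Hahn-Banach some real linear functional is strictly larger at `x` than on all of `Q`. As `Q` is
compact, the coefficient vectors of such functionals form an open cone. Rounding the coordinates of
a long multiple of a vector barely changes its direction, so a nonempty open cone contains an
integral vector. The corresponding homomorphism `φ` has `φ_ℝ(x) ∉ φ_ℝ(Q)`.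
-/

open Pointwise

/-- An integral polytope in `ℝ^n`: the convex hull of a nonempty finite
subset of the lattice `ℤ^n ⊆ ℝ^n`. -/
def IsIntegralPolytope {n : ℕ} (P : Set (Fin n → ℝ)) : Prop :=
  ∃ S : Finset (Fin n → ℤ), S.Nonempty ∧
    P = convexHull ℝ ((fun z : Fin n → ℤ => fun i => (z i : ℝ)) '' (S : Set (Fin n → ℤ)))

/-- The `ℝ`-linear extension of a group homomorphism `φ : ℤ^n → ℤ`. -/
noncomputable def extendR {n : ℕ} (φ : (Fin n → ℤ) →+ ℤ) : (Fin n → ℝ) → ℝ :=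
  fun x => ∑ i, x i * ((φ (Pi.single i 1) : ℤ) : ℝ)

open Filter Topology

section IntegralVectors

variable {R : Type*} [Field R] [LinearOrder R] [IsStrictOrderedRing R] [FloorRing R]
  [TopologicalSpace R] [OrderTopology R]

lemma tendsto_int_floor_mul_div_atTop (a : R) :
    Tendsto (fun t : R => (⌊a * t⌋ : R) / t) atTop (𝓝 a) := by
  have hlower : Tendsto (fun t : R => a - t⁻¹) atTop (𝓝 a) := by
    simpa using tendsto_const_nhds.sub (tendsto_inv_atTop_zero (𝕜 := R))
  refine tendsto_of_tendsto_of_tendsto_of_le_of_le' hlower tendsto_const_nhds ?_ ?_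
  · filter_upwards [eventually_gt_atTop 0] with t ht
    rw [le_div_iff₀ ht, sub_mul, inv_mul_cancel₀ ht.ne']
    exact (Int.sub_one_lt_floor _).le
  · filter_upwards [eventually_gt_atTop 0] with t ht
    exact (div_le_iff₀ ht).2 (Int.floor_le _)

lemma exists_intCast_mem_of_isOpen_of_smul_mem {ι : Type*} {U : Set (ι → R)} (hU : IsOpen U)
    (hne : U.Nonempty) (hsmul : ∀ t : R, 0 < t → ∀ w ∈ U, t • w ∈ U) :
    ∃ c : ι → ℤ, (fun i => (c i : R)) ∈ U := by
  obtain ⟨w, hw⟩ := hne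
  have hlim : Tendsto (fun (t : R) i => (⌊w i * t⌋ : R) / t) atTop (𝓝 w) :=
    tendsto_pi_nhds.2 fun i => tendsto_int_floor_mul_div_atTop (w i)
  obtain ⟨t, htU, ht⟩ := ((hlim.eventually_mem (hU.mem_nhds hw)).and (eventually_gt_atTop 0)).exists
  refine ⟨fun i => ⌊w i * t⌋, ?_⟩
  convert hsmul t ht _ htU using 2 with i
  simp [mul_div_cancel₀ _ ht.ne']

end IntegralVectors

lemma isOpen_setOf_forall_mem_of_isCompact {X Y : Type*} [TopologicalSpace X] [TopologicalSpace Y]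
    {K : Set Y} (hK : IsCompact K) {V : Set (X × Y)} (hV : IsOpen V) :
    IsOpen {a | ∀ y ∈ K, (a, y) ∈ V} :=
  isOpen_iff_eventually.2 fun _ ha =>
    hK.eventually_forall_of_forall_eventually fun y hy => hV.mem_nhds (ha y hy)

section Separation

variable {ι : Type*} [Fintype ι] {K : Set (ι → ℝ)} {x : ι → ℝ}

lemma exists_forall_dotProduct_lt_of_isClosed (hconv : Convex ℝ K) (hclosed : IsClosed K)
    (hx : x ∉ K) : ∃ w : ι → ℝ, ∀ y ∈ K, w ⬝ᵥ y < w ⬝ᵥ x := by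
  classical
  obtain ⟨f, u, hfu, hux⟩ := geometric_hahn_banach_closed_point hconv hclosed hx
  obtain ⟨w, hw⟩ := (dotProductEquiv ℝ ι).surjective f.toLinearMap
  have hf (y : ι → ℝ) : w ⬝ᵥ y = f y := LinearMap.congr_fun hw y
  exact ⟨w, fun y hy => by simpa only [hf] using (hfu y hy).trans hux⟩

lemma exists_int_forall_dotProduct_lt_of_isCompact (hconv : Convex ℝ K) (hcomp : IsCompact K)
    (hx : x ∉ K) :
    ∃ c : ι → ℤ, ∀ y ∈ K, (fun i => (c i : ℝ)) ⬝ᵥ y < (fun i => (c i : ℝ)) ⬝ᵥ x := by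
  have hopen : IsOpen {w : ι → ℝ | ∀ y ∈ K, w ⬝ᵥ y < w ⬝ᵥ x} :=
    isOpen_setOf_forall_mem_of_isCompact hcomp
      (V := {p : (ι → ℝ) × (ι → ℝ) | p.1 ⬝ᵥ p.2 < p.1 ⬝ᵥ x})
      (isOpen_lt (by fun_prop) (by fun_prop))
  refine exists_intCast_mem_of_isOpen_of_smul_mem hopen
    (exists_forall_dotProduct_lt_of_isClosed hconv hcomp.isClosed hx) fun t ht w hw y hy => ?_
  simpa only [smul_dotProduct] using smul_lt_smul_of_pos_left (hw y hy) ht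

end Separation

section IntegralFunctionals

variable {n : ℕ}

lemma extendR_linearCombination (c : Fin n → ℤ) (x : Fin n → ℝ) :
    extendR (Fintype.linearCombination ℤ c).toAddMonoidHom x = (fun i => (c i : ℝ)) ⬝ᵥ x := by
  simp [extendR, dotProduct, mul_comm]

lemma exists_extendR_notMem_image {K : Set (Fin n → ℝ)} (hconv : Convex ℝ K) (hcomp : IsCompact K)
    {x : Fin n → ℝ} (hx : x ∉ K) : ∃ φ : (Fin n → ℤ) →+ ℤ, extendR φ x ∉ extendR φ '' K := by
  obtain ⟨c, hc⟩ := exists_int_forall_dotProduct_lt_of_isCompact hconv hcomp hx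
  refine ⟨(Fintype.linearCombination ℤ c).toAddMonoidHom, ?_⟩
  rintro ⟨y, hy, hyx⟩
  rw [extendR_linearCombination, extendR_linearCombination] at hyx
  exact (hc y hy).ne hyx

lemma exists_extendR_image_ne_of_not_subset {K L : Set (Fin n → ℝ)} (hconv : Convex ℝ K)
    (hcomp : IsCompact K) (hLK : ¬L ⊆ K) :
    ∃ φ : (Fin n → ℤ) →+ ℤ, extendR φ '' L ≠ extendR φ '' K := by
  obtain ⟨x, hxL, hxK⟩ := Set.not_subset.1 hLK
  obtain ⟨φ, hφ⟩ := exists_extendR_notMem_image hconv hcomp hxK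
  exact ⟨φ, fun h => hφ (h ▸ Set.mem_image_of_mem _ hxL)⟩

end IntegralFunctionals

namespace IsIntegralPolytope

variable {n : ℕ} {P : Set (Fin n → ℝ)}

protected lemma convex (hP : IsIntegralPolytope P) : Convex ℝ P := by
  obtain ⟨S, -, rfl⟩ := hP
  exact convex_convexHull ℝ _

protected lemma isCompact (hP : IsIntegralPolytope P) : IsCompact P := by
  obtain ⟨S, -, rfl⟩ := hP
  exact (S.finite_toSet.image _).isCompact_convexHull ℝ

end IsIntegralPolytope

theorem exists_addMonoidHom_image_ne_of_integralPolytope_ne_general {n : ℕ}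
    {P Q : Set (Fin n → ℝ)} (hPconv : Convex ℝ P) (hPcomp : IsCompact P)
    (hQconv : Convex ℝ Q) (hQclosed : IsClosed Q) (hPQ : P ≠ Q) :
    ∃ φ : (Fin n → ℤ) →+ ℤ, extendR φ '' P ≠ extendR φ '' Q := by
  by_cases hQP : Q ⊆ P
  · have hPQ' : ¬P ⊆ Q := fun h => hPQ (h.antisymm hQP)
    exact exists_extendR_image_ne_of_not_subset hQconv (hPcomp.of_isClosed_subset hQclosed hQP) hPQ'
  · obtain ⟨φ, hφ⟩ := exists_extendR_image_ne_of_not_subset hPconv hPcomp hQP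
    exact ⟨φ, hφ.symm⟩

/-- If `P ≠ Q` are integral polytopes in `ℝ^n`, then some homomorphism
`φ : ℤ^n → ℤ`, via its `ℝ`-linear extension, separates them:
`φ_ℝ(P) ≠ φ_ℝ(Q)` as subsets of `ℝ`. -/
theorem exists_addMonoidHom_image_ne_of_integralPolytope_ne {n : ℕ}
    (P Q : Set (Fin n → ℝ))
    (hP : IsIntegralPolytope P) (hQ : IsIntegralPolytope Q) (hPQ : P ≠ Q) :
    ∃ φ : (Fin n → ℤ) →+ ℤ, extendR φ '' P ≠ extendR φ '' Q :=
  exists_addMonoidHom_image_ne_of_integralPolytope_ne_general hP.convex hP.isCompact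
    hQ.convex hQ.isCompact.isClosed hPQ
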